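/- Let (X,d) be a complete b-rectangular metric space with coefficient s ≥ 1, T : X → X a mapping, and φ : X → [0,∞) a lower semicontinuous function. Let ψ be an altering distance function, ϕ ∈ Φ_u, F a C-class function, and let a, b, c ≥ 0 with a + b + c > 0. Suppose that for all x, y ∈ X, ψ(s²d(Tx,Ty) + φ(Tx) + φ(Ty)) ≤ F(ψ(M(x,y)), ϕ(M(x,y))), where M(x,y) = (a[d(x,y)+φ(x)+φ(y)] + b[d(x,Tx)+φ(x)+φ(Tx)] + c[d(y,Ty)+φ(y)+φ(Ty)]) / (a+b+c). Then T has a unique fixed point z ∈ X, and moreover φ(z) = 0. -/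

import Mathlib

/-!
The hypothesis on `ψ`, `ϕ`, `F` enters only through a Meir–Keeler type gap (`gap_real`): for each
level `m > 0` there is `δ > 0` such that `M(x,y) < m + δ` forces
`s² d(Tx,Ty) + φ(Tx) + φ(Ty) ≤ m - δ`. Indeed `h = F(ψ ·, ϕ ·)` is continuous with `h(t) < ψ(t)`
for `t > 0`, and `ψ` is monotone. Since `M` is a weighted mean of
`P(x,y)`, `P(x,Tx)`, `P(y,Ty)` with `P(x,y) = d(x,y) + φ(x) + φ(y)`, it is enough that these three
numbers are below `m + δ`; this is the property `Gap`, and the rest uses nothing else.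

`Gap` gives `φ(z) = 0` at fixed points (level `2φ(z)`) and uniqueness (level `d(z,w)`). For a Picard
orbit `xₙ` without a fixed point, `P(xₙ,xₙ₊₁)` strictly decreases, so the orbit is injective and the
rectangular inequality applies to its points; moreover `P(xₙ,xₙ₊₁)` and `P(xₙ,xₙ₊₂)` tend to `0`.
The Cauchy property is shown by proving `d(xₙ,xₙ₊ₖ) < ε` for all `k` by induction in steps of two:
going around a rectangle costs a factor `s`, and `Gap` at level `sε` regains it through `s²`.
Finally `Gap` at level `d(z,Tz) + φ(Tz)` shows that the limit `z` is fixed.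
-/

open Filter Topology

/-- A b-rectangular metric space with coefficient `s`. -/
structure RectBMetric (X : Type*) (s : ℝ) where
  d : X → X → ℝ
  nonneg : ∀ x y, 0 ≤ d x y
  eq_iff : ∀ x y, d x y = 0 ↔ x = y
  symm : ∀ x y, d x y = d y x
  rect : ∀ x y u v : X, u ≠ v → u ≠ x → u ≠ y → v ≠ x → v ≠ y →
    d x y ≤ s * (d x u + d u v + d v y)

namespace RectBMetric

variable {X : Type*} {s : ℝ}

/-- Convergence of a sequence in a b-rectangular metric space. -/
def TendstoSeq (B : RectBMetric X s) (x : ℕ → X) (l : X) : Prop :=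
  Filter.Tendsto (fun n => B.d (x n) l) Filter.atTop (nhds 0)

/-- Cauchy sequences in a b-rectangular metric space. -/
def IsCauchySeq (B : RectBMetric X s) (x : ℕ → X) : Prop :=
  ∀ ε : ℝ, 0 < ε → ∃ N : ℕ, ∀ m ≥ N, ∀ n ≥ N, B.d (x m) (x n) < ε

/-- Completeness of a b-rectangular metric space. -/
def Complete (B : RectBMetric X s) : Prop :=
  ∀ x : ℕ → X, B.IsCauchySeq x → ∃ l, B.TendstoSeq x l

/-- Lower semicontinuity of `φ : X → ℝ` with respect to a b-rectangular metric. -/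
def LSC (B : RectBMetric X s) (φ : X → ℝ) : Prop :=
  ∀ (x : ℕ → X) (l : X), B.TendstoSeq x l →
    φ l ≤ Filter.liminf (fun n => φ (x n)) Filter.atTop

/-- The quantity `M(x,y,d,T,φ)`. -/
def Mfun (B : RectBMetric X s) (T : X → X) (φ : X → ℝ) (x y : X) : ℝ :=
  max (B.d x y + φ x + φ y)
    (max (B.d x (T x) + φ x + φ (T x)) (B.d y (T y) + φ y + φ (T y)))

end RectBMetric

/-- An altering distance function on `[0,∞)`. -/
def AlteringDistance (ψ : ℝ → ℝ) : Prop :=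
  ContinuousOn ψ (Set.Ici 0) ∧ MonotoneOn ψ (Set.Ici 0) ∧
    (∀ t ≥ (0:ℝ), 0 ≤ ψ t) ∧ (∀ t ≥ (0:ℝ), (ψ t = 0 ↔ t = 0))

/-- The class `Φᵤ`: continuous `ϕ : [0,∞) → [0,∞)` with `ϕ(t) > 0` for `t > 0`, `ϕ(0) ≥ 0`. -/
def PhiU (ϕ : ℝ → ℝ) : Prop :=
  ContinuousOn ϕ (Set.Ici 0) ∧ (∀ t : ℝ, 0 < t → 0 < ϕ t) ∧ 0 ≤ ϕ 0

/-- C-class functions. -/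
def CClass (F : ℝ → ℝ → ℝ) : Prop :=
  ContinuousOn (fun p : ℝ × ℝ => F p.1 p.2) (Set.Ici 0 ×ˢ Set.Ici 0) ∧
    (∀ a b : ℝ, 0 ≤ a → 0 ≤ b → F a b ≤ a) ∧
    (∀ a b : ℝ, 0 ≤ a → 0 ≤ b → F a b = a → a = 0 ∨ b = 0)

/-! ### The Meir–Keeler gap -/

/-- The gap at level `m`, for numbers `M, N ≥ 0` linked by `ψ(N) ≤ F(ψ(M), ϕ(M))`. -/
lemma gap_real {ψ ϕ : ℝ → ℝ} {F : ℝ → ℝ → ℝ}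
    (hψ : AlteringDistance ψ) (hϕ : PhiU ϕ) (hF : CClass F) {m : ℝ} (hm : 0 < m) :
    ∃ δ > 0, ∀ M N : ℝ, 0 ≤ M → 0 ≤ N → ψ N ≤ F (ψ M) (ϕ M) → M < m + δ → N ≤ m - δ := by
  obtain ⟨ψc, ψmono, ψnn, ψ0⟩ := hψ
  obtain ⟨ϕc, ϕpos, ϕ0⟩ := hϕ
  obtain ⟨Fc, Fle, Feq⟩ := hF
  have ϕnn : ∀ t : ℝ, 0 ≤ t → 0 ≤ ϕ t := by
    intro t ht
    rcases ht.eq_or_lt with rfl | h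
    · exact ϕ0
    · exact (ϕpos t h).le
  have hlt : ∀ t : ℝ, 0 < t → F (ψ t) (ϕ t) < ψ t := by
    intro t ht
    refine lt_of_le_of_ne (Fle _ _ (ψnn t ht.le) (ϕnn t ht.le)) fun h => ?_
    rcases Feq _ _ (ψnn t ht.le) (ϕnn t ht.le) h with h | h
    · exact ht.ne' ((ψ0 t ht.le).1 h)
    · exact (ϕpos t ht).ne' h
  have hc : ContinuousOn (fun t => F (ψ t) (ϕ t)) (Set.Ici 0) :=
    Fc.comp (ψc.prodMk ϕc) fun t ht => ⟨ψnn t ht, ϕnn t ht⟩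
  obtain ⟨q, hq1, hq2⟩ := exists_between (hlt m hm)
  have hnhds : Set.Ici (0 : ℝ) ∈ 𝓝 m := Ici_mem_nhds hm
  have e1 := (hc.continuousAt hnhds).eventually_lt_const hq1
  have e2 := (ψc.continuousAt hnhds).eventually_const_lt hq2
  obtain ⟨r, hr, hball⟩ := Metric.eventually_nhds_iff.1 (e1.and e2)
  obtain ⟨δ, hδ, hδ'⟩ := exists_between (lt_min hr hm)
  have hδr := hδ'.trans_le (min_le_left _ _)
  have hδm := hδ'.trans_le (min_le_right _ _)
  refine ⟨δ, hδ, fun M N hM hN hMN hMlt => ?_⟩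
  by_contra! hcon
  by_cases hMm : m - δ < M
  · have h1 := (hball (y := M) (by rw [Real.dist_eq, abs_lt]; constructor <;> linarith)).1
    have h2 := (hball (y := m - δ) (by rw [Real.dist_eq, abs_lt]; constructor <;> linarith)).2
    have h3 := ψmono (Set.mem_Ici.2 (by linarith : (0 : ℝ) ≤ m - δ)) hN hcon.le
    linarith
  · have hMN' : M < N := by linarith
    rcases hM.eq_or_lt with rfl | hM0
    · have h1 := Fle _ _ (ψnn 0 le_rfl) (ϕnn 0 le_rfl)
      rw [(ψ0 0 le_rfl).2 rfl] at h1 hMN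
      have := (ψ0 N hN).1 (le_antisymm (by linarith) (ψnn N hN))
      linarith
    · have h1 := hlt M hM0
      have h2 := ψmono hM hN hMN'.le
      linarith

/-- `P(x,y) = d(x,y) + φ(x) + φ(y)`. -/
def RectBMetric.P {X : Type*} {s : ℝ} (B : RectBMetric X s) (φ : X → ℝ) (x y : X) : ℝ :=
  B.d x y + φ x + φ y

/-- The Meir–Keeler type condition, with the weighted mean `M(x,y)` replaced by a bound on each of
the three numbers it averages, so that the weights disappear. -/
def RectBMetric.Gap {X : Type*} {s : ℝ} (B : RectBMetric X s) (T : X → X) (φ : X → ℝ) : Prop :=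
  ∀ m > 0, ∃ δ > 0, ∀ x y, B.P φ x y < m + δ → B.P φ x (T x) < m + δ → B.P φ y (T y) < m + δ →
    s ^ 2 * B.d (T x) (T y) + φ (T x) + φ (T y) ≤ m - δ

/-- A nonincreasing nonnegative sequence that cannot linger just above a positive level tends
to `0`. -/
lemma tendsto_zero_of_gap {u : ℕ → ℝ} (hu0 : ∀ n, 0 ≤ u n) (hu : Antitone u)
    (h : ∀ m > 0, ∃ δ > 0, ∀ᶠ n in atTop, u n < m + δ → u (n + 1) < m) :
    Tendsto u atTop (𝓝 0) := by
  have hbdd : BddBelow (Set.range u) := ⟨0, by rintro _ ⟨n, rfl⟩; exact hu0 n⟩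
  have ht := tendsto_atTop_ciInf hu hbdd
  set L := ⨅ n, u n
  have hL : 0 ≤ L := le_ciInf hu0
  rcases hL.eq_or_lt with h0 | hpos
  · rwa [← h0] at ht
  · obtain ⟨δ, hδ, hev⟩ := h L hpos
    have e := ht.eventually_lt_const (show L < L + δ by linarith)
    obtain ⟨n, h1, h2⟩ := (hev.and e).exists
    have := ciInf_le hbdd (n + 1)
    exact absurd (h1 h2) (not_lt.2 this)

namespace RectBMetric

variable {X : Type*} {s : ℝ}

/-! ### Fixed points -/

lemma d_self (B : RectBMetric X s) (x : X) : B.d x x = 0 := (B.eq_iff x x).2 rfl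

lemma le_sq_mul_d (hs : 1 ≤ s) (B : RectBMetric X s) (x y : X) : B.d x y ≤ s ^ 2 * B.d x y :=
  le_mul_of_one_le_left (B.nonneg x y) (one_le_pow₀ hs)

lemma phi_eq_zero_of_fixed {B : RectBMetric X s} {T : X → X} {φ : X → ℝ} (hφ0 : ∀ x, 0 ≤ φ x)
    (hG : B.Gap T φ) {z : X} (hz : T z = z) : φ z = 0 := by
  by_contra hne
  have hpos : 0 < φ z := lt_of_le_of_ne (hφ0 z) (Ne.symm hne)
  obtain ⟨δ, hδ, h⟩ := hG (2 * φ z) (by linarith)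
  have := h z z
  simp only [P, hz, B.d_self] at this
  have := this (by linarith) (by linarith) (by linarith)
  linarith

lemma fixed_unique (hs : 1 ≤ s) {B : RectBMetric X s} {T : X → X} {φ : X → ℝ}
    (hφ0 : ∀ x, 0 ≤ φ x) (hG : B.Gap T φ) {z w : X} (hz : T z = z) (hw : T w = w) : w = z := by
  by_contra hne
  have hpos : 0 < B.d w z := lt_of_le_of_ne (B.nonneg _ _) fun h => hne ((B.eq_iff _ _).1 h.symm)
  obtain ⟨δ, hδ, h⟩ := hG (B.d w z) hpos
  have h1 := h w z
  simp only [P, hz, hw, B.d_self, phi_eq_zero_of_fixed hφ0 hG hz,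
    phi_eq_zero_of_fixed hφ0 hG hw] at h1
  have h2 := h1 (by linarith) (by linarith) (by linarith)
  have h3 := B.le_sq_mul_d hs w z
  linarith

/-! ### Picard orbits -/

/-- An orbit without fixed points has strictly decreasing `P(xₙ,xₙ₊₁)`. -/
lemma P_succ_lt (hs : 1 ≤ s) {B : RectBMetric X s} {T : X → X} {φ : X → ℝ}
    (hφ0 : ∀ x, 0 ≤ φ x) (hG : B.Gap T φ) {y : X} (hy : T (T y) ≠ T y) :
    B.P φ (T y) (T (T y)) < B.P φ y (T y) := by
  have hd : 0 < B.d (T y) (T (T y)) :=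
    lt_of_le_of_ne (B.nonneg _ _) fun h => hy ((B.eq_iff _ _).1 h.symm).symm
  by_contra! hcon
  have := hφ0 (T y)
  have := hφ0 (T (T y))
  obtain ⟨δ, hδ, h⟩ := hG (B.P φ (T y) (T (T y))) (by unfold P; linarith)
  have h1 := h y (T y) (by linarith) (by linarith) (by linarith)
  have h3 := B.le_sq_mul_d hs (T y) (T (T y))
  unfold P at h1
  linarith

/-- Cauchy property of an injective orbit whose one-step and two-step quantities vanish. The
two-step one is a separate hypothesis because the rectangular inequality degenerates there. -/
lemma isCauchySeq_orbit (hs : 1 ≤ s) {B : RectBMetric X s} {T : X → X} {φ : X → ℝ}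
    (hφ0 : ∀ x, 0 ≤ φ x) (hG : B.Gap T φ) {x : ℕ → X} (hx : ∀ n, x (n + 1) = T (x n))
    (hinj : Function.Injective x)
    (h1 : Tendsto (fun n => B.P φ (x n) (x (n + 1))) atTop (𝓝 0))
    (h2 : Tendsto (fun n => B.P φ (x n) (x (n + 2))) atTop (𝓝 0)) : B.IsCauchySeq x := by
  intro ε hε
  have hs0 : 0 < s := by linarith
  obtain ⟨δ, hδ, hgap⟩ := hG (s * ε) (by positivity)
  -- `2 * s * η + 2 * η = δ`: two short sides of a rectangle and two values of `φ`.
  obtain ⟨η, hη, hηδ⟩ : ∃ η > 0, 2 * (s * η) + 2 * η = δ :=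
    ⟨δ / (2 * s + 2), by positivity, by field_simp⟩
  have hsη : η ≤ s * η := le_mul_of_one_le_left hη.le hs
  have hm : 0 < min η ε := lt_min hη hε
  obtain ⟨N, hN⟩ := eventually_atTop.1
    ((h1.eventually_lt_const hm).and (h2.eventually_lt_const hm))
  have hd : ∀ n ≥ N, B.d (x n) (x (n + 1)) < η ∧ φ (x n) < η ∧ B.P φ (x n) (x (n + 1)) < η := by
    intro n hn
    have h := ((hN n hn).1).trans_le (min_le_left _ _)
    have := hφ0 (x n)
    have := hφ0 (x (n + 1))
    have := B.nonneg (x n) (x (n + 1))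
    refine ⟨?_, ?_, h⟩ <;> unfold P at h <;> linarith
  have key : ∀ k, ∀ p ≥ N, B.d (x (p + 1)) (x (p + 1 + k)) < ε := by
    intro k
    induction k using Nat.strong_induction_on with
    | _ k ih =>
      intro p hp
      match k, ih with
      | 0, _ => simpa [B.d_self] using hε
      | 1, _ =>
        have h := ((hN (p + 1) (by omega)).1).trans_le (min_le_right _ _)
        have := hφ0 (x (p + 1))
        have := hφ0 (x (p + 1 + 1))
        unfold P at h
        linarith
      | 2, _ =>
        have h := ((hN (p + 1) (by omega)).2).trans_le (min_le_right _ _)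
        have := hφ0 (x (p + 1))
        have := hφ0 (x (p + 1 + 2))
        unfold P at h
        linarith
      | k + 3, ih =>
        have hk := ih (k + 1) (by omega) p hp
        rw [show p + 1 + (k + 1) = p + k + 2 by omega] at hk
        have hne : ∀ i j : ℕ, i ≠ j → x i ≠ x j := fun i j hij h => hij (hinj h)
        have hr := B.rect (x p) (x (p + k + 3)) (x (p + 1)) (x (p + k + 2))
          (hne _ _ (by omega)) (hne _ _ (by omega)) (hne _ _ (by omega))
          (hne _ _ (by omega)) (hne _ _ (by omega))
        obtain ⟨a1, a2, a3⟩ := hd p hp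
        obtain ⟨b1, -, -⟩ := hd (p + k + 2) (by omega)
        obtain ⟨-, c2, c3⟩ := hd (p + k + 3) (by omega)
        have hr' : s * (B.d (x p) (x (p + 1)) + B.d (x (p + 1)) (x (p + k + 2))
            + B.d (x (p + k + 2)) (x (p + k + 3))) ≤ s * (η + ε + η) := by
          gcongr
        have hsε : 0 < s * ε := by positivity
        have hg := hgap (x p) (x (p + k + 3)) (by unfold P; linarith)
          (by rw [← hx]; linarith) (by rw [← hx]; linarith)
        rw [← hx, ← hx] at hg
        rw [show p + 1 + (k + 3) = p + k + 3 + 1 by omega]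
        have := hφ0 (x (p + 1))
        have := hφ0 (x (p + k + 3 + 1))
        have hnn := B.nonneg (x (p + 1)) (x (p + k + 3 + 1))
        have h3 : s * (s * B.d (x (p + 1)) (x (p + k + 3 + 1))) < s * ε := by
          rw [← mul_assoc, ← sq]; linarith
        exact (le_mul_of_one_le_left hnn hs).trans_lt (lt_of_mul_lt_mul_left h3 hs0.le)
  have key' : ∀ i j, N + 1 ≤ i → i ≤ j → B.d (x i) (x j) < ε := by
    intro i j hi hij
    have := key (j - i) (i - 1) (by omega)
    rwa [show i - 1 + 1 = i by omega, show i + (j - i) = j by omega] at this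
  refine ⟨N + 1, fun i hi j hj => ?_⟩
  rcases le_total i j with h | h
  · exact key' i j hi h
  · rw [B.symm]; exact key' j i hj h

/-- The limit of an injective orbit is fixed: with `A = d(z,Tz) + φ(Tz)`, the gap at level `A` makes
`s² d(xₙ₊₁,Tz) + φ(Tz) ≤ A - δ`, while the rectangle `z, xₙ, xₙ₊₁, Tz` bounds `A` by
`s d(xₙ₊₁,Tz) + φ(Tz)` up to terms tending to `0`. -/
lemma limit_fixed (hs : 1 ≤ s) {B : RectBMetric X s} {T : X → X} {φ : X → ℝ}
    (hφ0 : ∀ x, 0 ≤ φ x) (hφ : B.LSC φ) (hG : B.Gap T φ) {x : ℕ → X}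
    (hx : ∀ n, x (n + 1) = T (x n)) (hinj : Function.Injective x)
    (h1 : Tendsto (fun n => B.P φ (x n) (x (n + 1))) atTop (𝓝 0)) {z : X}
    (hz : B.TendstoSeq x z) : T z = z := by
  have hφx : Tendsto (fun n => φ (x n)) atTop (𝓝 0) := by
    refine squeeze_zero (fun n => hφ0 _) (fun n => ?_) h1
    have := hφ0 (x (n + 1))
    have := B.nonneg (x n) (x (n + 1))
    unfold P
    linarith
  have hφz : φ z = 0 := le_antisymm ((hφ x z hz).trans_eq hφx.liminf_eq) (hφ0 z)
  by_contra hne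
  have hd : 0 < B.d z (T z) :=
    lt_of_le_of_ne (B.nonneg _ _) fun h => hne ((B.eq_iff _ _).1 h.symm).symm
  have hφT := hφ0 (T z)
  obtain ⟨δ, hδ, hgap⟩ := hG (B.P φ z (T z)) (by unfold P; linarith)
  have hs0 : 0 < s := by linarith
  obtain ⟨η, hη, hηδ⟩ : ∃ η > 0, 3 * (s * η) = δ := ⟨δ / (3 * s), by positivity, by field_simp⟩
  have hsη : η ≤ s * η := le_mul_of_one_le_left hη.le hs
  -- An injective sequence eventually avoids any given point.
  have hav : ∀ w : X, ∀ᶠ n in atTop, x n ≠ w := fun w => by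
    have := hinj.tendsto_cofinite.eventually (Set.finite_singleton w).compl_mem_cofinite
    rw [Nat.cofinite_eq_atTop] at this
    exact this
  have hsh : ∀ {p : ℕ → Prop}, (∀ᶠ n in atTop, p n) → ∀ᶠ n in atTop, p (n + 1) :=
    fun h => (tendsto_add_atTop_nat 1).eventually h
  obtain ⟨n, n1, n2, n3, n4, n5, n6, n7⟩ := ((hav z).and ((hav (T z)).and ((hsh (hav z)).and
    ((hsh (hav (T z))).and ((h1.eventually_lt_const hη).and ((hφx.eventually_lt_const hη).and
      (Tendsto.eventually_lt_const hη hz))))))).exists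
  have hr := B.rect z (T z) (x n) (x (n + 1)) (fun h => by have := hinj h; omega) n1 n2 n3 n4
  have hPz : 0 < B.P φ z (T z) := by unfold P; linarith
  have hg := hgap (x n) z (by unfold P at hPz ⊢; linarith) (by rw [← hx]; linarith)
    (by linarith)
  rw [← hx] at hg
  have q1 := hφ0 (x n)
  have q2 := hφ0 (x (n + 1))
  have q3 := B.nonneg (x (n + 1)) (T z)
  unfold P at n5 hg
  have h4 : s * (B.d z (x n) + B.d (x n) (x (n + 1)) + B.d (x (n + 1)) (T z)) ≤
      s * (η + η + B.d (x (n + 1)) (T z)) := by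
    rw [B.symm z]
    gcongr
    linarith
  have h5 : s * B.d (x (n + 1)) (T z) ≤ s ^ 2 * B.d (x (n + 1)) (T z) := by
    gcongr
    exact le_self_pow₀ hs two_ne_zero
  linarith

lemma exists_fixed [Nonempty X] (hs : 1 ≤ s) {B : RectBMetric X s} (hcomp : B.Complete) {T : X → X}
    {φ : X → ℝ} (hφ0 : ∀ x, 0 ≤ φ x) (hφ : B.LSC φ) (hG : B.Gap T φ) : ∃ z, T z = z := by
  by_contra! hno
  obtain ⟨x0⟩ := ‹Nonempty X›
  set x : ℕ → X := fun n => T^[n] x0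
  have hx : ∀ n, x (n + 1) = T (x n) := fun n => Function.iterate_succ_apply' T n x0
  have hP0 : ∀ y w, 0 ≤ B.P φ y w := fun y w =>
    add_nonneg (add_nonneg (B.nonneg y w) (hφ0 y)) (hφ0 w)
  have hN : ∀ y w, B.P φ y w ≤ s ^ 2 * B.d y w + φ y + φ w := fun y w => by
    have := B.le_sq_mul_d hs y w
    unfold P
    linarith
  set D : ℕ → ℝ := fun n => B.P φ (x n) (x (n + 1)) with hD
  have hDanti : StrictAnti D := strictAnti_nat_of_succ_lt fun n => by
    simp only [hD, hx]
    exact P_succ_lt hs hφ0 hG (hno _)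
  have hinj : Function.Injective x := fun i j hij => hDanti.injective (by simp only [hD, hx, hij])
  have hgapx : ∀ m > 0, ∃ δ > 0, ∀ i j, B.P φ (x i) (x j) < m + δ → D i < m + δ → D j < m + δ →
      B.P φ (x (i + 1)) (x (j + 1)) < m := by
    intro m hm
    obtain ⟨δ, hδ, h⟩ := hG m hm
    refine ⟨δ, hδ, fun i j h1 h2 h3 => ?_⟩
    simp only [hD, hx] at h2 h3
    have := h _ _ h1 h2 h3
    rw [← hx, ← hx] at this
    linarith [hN (x (i + 1)) (x (j + 1))]
  have h1 : Tendsto D atTop (𝓝 0) := by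
    refine tendsto_zero_of_gap (fun n => hP0 _ _) hDanti.antitone fun m hm => ?_
    obtain ⟨δ, hδ, h⟩ := hgapx m hm
    refine ⟨δ, hδ, Eventually.of_forall fun n hn => h n (n + 1) hn hn ?_⟩
    exact (hDanti n.lt_succ_self).trans hn
  -- `P(xₙ,xₙ₊₂)` alone need not be monotone; its maximum with `D n` is.
  set W : ℕ → ℝ := fun n => max (B.P φ (x n) (x (n + 2))) (D n) with hW
  have hWD : ∀ n, D n ≤ W n := fun n => le_max_right _ _
  have hstep : ∀ m > 0, ∃ δ > 0, ∀ n, W n < m + δ → B.P φ (x (n + 1)) (x (n + 1 + 2)) < m := by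
    intro m hm
    obtain ⟨δ, hδ, h⟩ := hgapx m hm
    refine ⟨δ, hδ, fun n hn => h n (n + 2) ((le_max_left _ _).trans_lt hn)
      ((hWD n).trans_lt hn) ?_⟩
    exact (hDanti (show n < n + 2 by omega)).trans ((hWD n).trans_lt hn)
  have hDpos : ∀ n, 0 < D n := fun n => (hP0 _ _).trans_lt (hDanti n.lt_succ_self)
  have hW2 : Tendsto W atTop (𝓝 0) := by
    refine tendsto_zero_of_gap (fun n => (hDpos n).le.trans (hWD n))
      (antitone_nat_of_succ_le fun n => ?_) fun m hm => ?_
    · obtain ⟨δ, hδ, h⟩ := hstep (W n) ((hDpos n).trans_le (hWD n))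
      exact max_le (h n (by linarith)).le ((hDanti n.lt_succ_self).le.trans (hWD n))
    · obtain ⟨δ, hδ, h⟩ := hstep m hm
      refine ⟨δ, hδ, ?_⟩
      filter_upwards [h1.eventually_lt_const hm] with n hn hWn
      exact max_lt (h n hWn) ((hDanti n.lt_succ_self).trans hn)
  have h2 : Tendsto (fun n => B.P φ (x n) (x (n + 2))) atTop (𝓝 0) :=
    squeeze_zero (fun n => hP0 _ _) (fun n => le_max_left _ _) hW2
  obtain ⟨z, hz⟩ := hcomp x (isCauchySeq_orbit hs hφ0 hG hx hinj h1 h2)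
  exact hno z (limit_fixed hs hφ0 hφ hG hx hinj h1 hz)

end RectBMetric

/-! ### The fixed point theorem -/

theorem stmt15 {X : Type*} [Nonempty X] {s : ℝ} (hs : 1 ≤ s) (B : RectBMetric X s)
    (hcomp : B.Complete) (T : X → X) (φ : X → ℝ) (hφ0 : ∀ x, 0 ≤ φ x)
    (hφ : B.LSC φ) (ψ ϕ : ℝ → ℝ) (F : ℝ → ℝ → ℝ)
    (hψ : AlteringDistance ψ) (hϕ : PhiU ϕ) (hF : CClass F)
    (a b c : ℝ) (ha : 0 ≤ a) (hb : 0 ≤ b) (hc : 0 ≤ c) (habc : 0 < a + b + c)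
    (hcontr : ∀ x y : X,
      ψ (s ^ 2 * B.d (T x) (T y) + φ (T x) + φ (T y)) ≤
        F (ψ ((a * (B.d x y + φ x + φ y) + b * (B.d x (T x) + φ x + φ (T x))
              + c * (B.d y (T y) + φ y + φ (T y))) / (a + b + c)))
          (ϕ ((a * (B.d x y + φ x + φ y) + b * (B.d x (T x) + φ x + φ (T x))
              + c * (B.d y (T y) + φ y + φ (T y))) / (a + b + c)))) :
    ∃ z : X, T z = z ∧ φ z = 0 ∧ ∀ w : X, T w = w → w = z := by
  have hG : B.Gap T φ := by
    intro m hm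
    obtain ⟨δ, hδ, h⟩ := gap_real hψ hϕ hF hm
    refine ⟨δ, hδ, fun x y h1 h2 h3 => ?_⟩
    have hP0 : ∀ y w, 0 ≤ B.d y w + φ y + φ w := fun y w =>
      add_nonneg (add_nonneg (B.nonneg y w) (hφ0 y)) (hφ0 w)
    have p1 := hP0 x y
    have p2 := hP0 x (T x)
    have p3 := hP0 y (T y)
    have q1 := hφ0 (T x)
    have q2 := hφ0 (T y)
    have q3 := B.nonneg (T x) (T y)
    refine h _ _ (by positivity) (by positivity) (hcontr x y) ?_
    unfold RectBMetric.P at h1 h2 h3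
    -- A number between the largest of the three averaged terms and `m + δ` bounds the mean.
    obtain ⟨r, hr, hrm⟩ := exists_between (max_lt h1 (max_lt h2 h3))
    obtain ⟨r1, hr'⟩ := max_lt_iff.1 hr
    obtain ⟨r2, r3⟩ := max_lt_iff.1 hr'
    refine lt_of_le_of_lt ?_ hrm
    rw [div_le_iff₀ habc]
    have := mul_le_mul_of_nonneg_left r1.le ha
    have := mul_le_mul_of_nonneg_left r2.le hb
    have := mul_le_mul_of_nonneg_left r3.le hc
    linarith
  obtain ⟨z, hz⟩ := RectBMetric.exists_fixed hs hcomp hφ0 hφ hG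
  exact ⟨z, hz, RectBMetric.phi_eq_zero_of_fixed hφ0 hG hz,
    fun w hw => RectBMetric.fixed_unique hs hφ0 hG hz hw⟩
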